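/- Let G be a finite simple graph with n vertices and e edges, minimum degree δ ≥ 1, maximum degree Δ, and independence number β. Then F(G) ≥ (n − β)·δ³ + (δ/β)·( 2β·(β·δ² + e²/(n − β)) − e² − 2β·(n − β)·Δ² ), with equality if and only if G is a regular balanced bipartite graph. -/

import Mathlib

open Finset

/-- The first Zagreb index of a graph: the sum of the squares of the vertex degrees. -/
def zagreb1 {V : Type*} [Fintype V] (G : SimpleGraph V) [DecidableRel G.Adj] : ℝ :=
  ∑ u, (G.degree u : ℝ) ^ 2

/-- The forgotten topological index of a graph: the sum of the cubes of the vertex degrees. -/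
def forgottenIndex {V : Type*} [Fintype V] (G : SimpleGraph V) [DecidableRel G.Adj] : ℝ :=
  ∑ u, (G.degree u : ℝ) ^ 3

/-- The inverse degree of a graph: the sum of the reciprocals of the vertex degrees. -/
noncomputable def invDegree {V : Type*} [Fintype V] (G : SimpleGraph V) [DecidableRel G.Adj] : ℝ :=
  ∑ u, 1 / (G.degree u : ℝ)

/-- The independence number of a graph: the largest cardinality of a set of pairwise
nonadjacent vertices. -/
noncomputable def indepNum {V : Type*} [Fintype V] (G : SimpleGraph V) : ℕ :=
  sSup {k | ∃ s : Finset V, s.card = k ∧ ∀ u ∈ s, ∀ v ∈ s, ¬ G.Adj u v}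

/-- A graph is a regular balanced bipartite graph if its vertices can be partitioned into
two parts of equal size with every edge joining the two parts, and all vertices have the
same degree. -/
def IsRegularBalancedBipartite {V : Type*} [Fintype V] (G : SimpleGraph V) [DecidableRel G.Adj] : Prop :=
  ∃ (A : Finset V) (r : ℕ), 2 * A.card = Fintype.card V ∧
    (∀ u v, G.Adj u v → (u ∈ A ↔ v ∉ A)) ∧ G.IsRegularOfDegree r

/-- A graph is `k`-connected if it has more than `k` vertices and removing any set of
fewer than `k` vertices leaves a connected graph. -/
def IsKConnected {V : Type*} [Fintype V] (G : SimpleGraph V) (k : ℕ) : Prop :=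
  k < Fintype.card V ∧
    ∀ S : Finset V, S.card < k → (G.induce (↑S : Set V)ᶜ).Connected

/-- A graph is traceable if it has a Hamiltonian path. -/
def IsTraceable {V : Type*} [DecidableEq V] (G : SimpleGraph V) : Prop :=
  ∃ (u v : V) (p : G.Walk u v), p.IsHamiltonian

/-!
Let `s` be a maximum independent set, `β = #s`. Every edge has at most one endpoint in `s` and at
least one outside, so `β δ ≤ e ≤ (n - β) Δ`. The claimed lower bound equals
`n δ³ - (δ / β) (e² - (β δ)²) - (2 δ / (n - β)) (((n - β) Δ)² - e²)`,
hence is at most `n δ³ ≤ F(G)`. Equality forces `G` to be regular and both corrections to vanish,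
that is `2 β = n`; in a regular graph this means that every edge joins `s` to its complement.
-/

section Bound

/-- The lower bound for the forgotten index of a graph with `n` vertices, `e` edges, minimum degree
`δ`, maximum degree `Δ` and independence number `b`, as a function of real parameters. It is
meaningful only for `b ≠ 0` and `b ≠ n`, where no division by zero occurs. -/
noncomputable def forgottenLowerBound (n e δ Δ b : ℝ) : ℝ :=
  (n - b) * δ ^ 3
    + (δ / b) * (2 * b * (b * δ ^ 2 + e ^ 2 / (n - b)) - e ^ 2 - 2 * b * (n - b) * Δ ^ 2)

variable {n e δ Δ b : ℝ}

theorem forgottenLowerBound_eq_sub (hb : b ≠ 0) (hbn : n - b ≠ 0) :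
    forgottenLowerBound n e δ Δ b = n * δ ^ 3
      - (δ / b * (e ^ 2 - (b * δ) ^ 2) + 2 * δ / (n - b) * (((n - b) * Δ) ^ 2 - e ^ 2)) := by
  rw [forgottenLowerBound]
  field_simp
  ring

theorem forgottenLowerBound_le (hb : 0 < b) (hbn : b < n) (hδ : 0 ≤ δ) (hbe : b * δ ≤ e)
    (hen : e ≤ (n - b) * Δ) : forgottenLowerBound n e δ Δ b ≤ n * δ ^ 3 := by
  have hnb : 0 < n - b := sub_pos.2 hbn
  have he : 0 ≤ e := (mul_nonneg hb.le hδ).trans hbe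
  have hgap₁ : 0 ≤ e ^ 2 - (b * δ) ^ 2 := sub_nonneg.2 (by gcongr)
  have hgap₂ : 0 ≤ ((n - b) * Δ) ^ 2 - e ^ 2 := sub_nonneg.2 (by gcongr)
  rw [forgottenLowerBound_eq_sub hb.ne' hnb.ne']
  exact sub_le_self _ (by positivity)

theorem forgottenLowerBound_eq_iff (hb : 0 < b) (hbn : b < n) (hδ : 0 < δ) (hbe : b * δ ≤ e)
    (hen : e ≤ (n - b) * Δ) :
    forgottenLowerBound n e δ Δ b = n * δ ^ 3 ↔ e = b * δ ∧ e = (n - b) * Δ := by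
  have hnb : 0 < n - b := sub_pos.2 hbn
  have he : 0 ≤ e := (mul_nonneg hb.le hδ.le).trans hbe
  have hgap₁ : 0 ≤ e ^ 2 - (b * δ) ^ 2 := sub_nonneg.2 (by gcongr)
  have hgap₂ : 0 ≤ ((n - b) * Δ) ^ 2 - e ^ 2 := sub_nonneg.2 (by gcongr)
  have hc₁ : δ / b ≠ 0 := by positivity
  have hc₂ : 2 * δ / (n - b) ≠ 0 := by positivity
  rw [forgottenLowerBound_eq_sub hb.ne' hnb.ne', sub_eq_self,
    add_eq_zero_iff_of_nonneg (by positivity) (by positivity),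
    mul_eq_zero_iff_left hc₁, mul_eq_zero_iff_left hc₂, sub_eq_zero, sub_eq_zero,
    sq_eq_sq₀ he (by positivity), sq_eq_sq₀ (he.trans hen) he, eq_comm (a := (n - b) * Δ)]

end Bound

section DegreePower

variable {V : Type*} [Fintype V] (G : SimpleGraph V) [DecidableRel G.Adj]

theorem card_mul_minDegree_pow_le_sum_degree_pow (k : ℕ) :
    (Fintype.card V : ℝ) * (G.minDegree : ℝ) ^ k ≤ ∑ v, (G.degree v : ℝ) ^ k := by
  rw [← nsmul_eq_mul]
  exact card_nsmul_le_sum univ _ _ fun v _ => by gcongr; exact G.minDegree_le_degree v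

theorem sum_degree_pow_eq_card_mul_minDegree_pow_iff {k : ℕ} (hk : k ≠ 0) :
    ∑ v, (G.degree v : ℝ) ^ k = Fintype.card V * (G.minDegree : ℝ) ^ k ↔
      G.IsRegularOfDegree G.minDegree := by
  have hle : ∀ v ∈ univ, (G.minDegree : ℝ) ^ k ≤ (G.degree v : ℝ) ^ k := fun v _ => by
    gcongr
    exact G.minDegree_le_degree v
  have hpow (v : V) : (G.minDegree : ℝ) ^ k = (G.degree v : ℝ) ^ k ↔ G.degree v = G.minDegree := by
    rw [pow_left_inj₀ (Nat.cast_nonneg _) (Nat.cast_nonneg _) hk, Nat.cast_inj, eq_comm]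
  rw [← nsmul_eq_mul, ← card_univ, ← sum_const, eq_comm, sum_eq_sum_iff_of_le hle]
  simp only [mem_univ, forall_const, hpow, SimpleGraph.IsRegularOfDegree]

end DegreePower

section IndepSet

variable {V : Type*} {G : SimpleGraph V}

theorem isIndepSet_iff_forall_not_adj {s : Set V} :
    G.IsIndepSet s ↔ ∀ u ∈ s, ∀ v ∈ s, ¬ G.Adj u v :=
  ⟨fun hs _ hu _ hv huv => hs hu hv huv.ne huv, fun hs u hu v hv _ => hs u hu v hv⟩

theorem isIndepSet_and_isVertexCover_iff {s : Set V} :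
    G.IsIndepSet s ∧ G.IsVertexCover s ↔ ∀ u v, G.Adj u v → (u ∈ s ↔ v ∉ s) := by
  rw [isIndepSet_iff_forall_not_adj, SimpleGraph.IsVertexCover]
  grind

variable [G.LocallyFinite] {s : Finset V}

theorem card_biUnion_incidenceFinset [DecidableEq V] (hs : G.IsIndepSet s) :
    #(s.biUnion fun v => G.incidenceFinset v) = ∑ v ∈ s, G.degree v := by
  have hdisj : (s : Set V).PairwiseDisjoint fun v => G.incidenceFinset v := by
    intro u hu v hv huv
    refine disjoint_left.2 fun x hxu hxv => hs hu hv huv ?_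
    rw [SimpleGraph.mem_incidenceFinset] at hxu hxv
    exact G.adj_of_mem_incidenceSet huv hxu hxv
  rw [card_biUnion hdisj]
  simp only [SimpleGraph.card_incidenceFinset_eq_degree]

variable [Fintype G.edgeSet]

theorem biUnion_incidenceFinset_subset [DecidableEq V] :
    (s.biUnion fun v => G.incidenceFinset v) ⊆ G.edgeFinset :=
  biUnion_subset.2 fun v _ => G.incidenceFinset_subset v

theorem edgeFinset_subset_biUnion_incidenceFinset_iff [DecidableEq V] :
    G.edgeFinset ⊆ (s.biUnion fun v => G.incidenceFinset v) ↔ G.IsVertexCover s := by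
  simp only [subset_iff, Sym2.forall, SimpleGraph.mem_edgeFinset, SimpleGraph.mem_edgeSet,
    mem_biUnion, SimpleGraph.mem_incidenceFinset, SimpleGraph.mk'_mem_incidenceSet_iff,
    SimpleGraph.IsVertexCover, mem_coe]
  grind

theorem sum_degree_le_card_edgeFinset (hs : G.IsIndepSet s) :
    ∑ v ∈ s, G.degree v ≤ #G.edgeFinset := by
  classical
  rw [← card_biUnion_incidenceFinset hs]
  exact card_le_card biUnion_incidenceFinset_subset

theorem sum_degree_eq_card_edgeFinset_iff (hs : G.IsIndepSet s) :
    ∑ v ∈ s, G.degree v = #G.edgeFinset ↔ G.IsVertexCover s := by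
  classical
  rw [← card_biUnion_incidenceFinset hs, ← edgeFinset_subset_biUnion_incidenceFinset_iff]
  exact ⟨fun h => (eq_of_subset_of_card_le biUnion_incidenceFinset_subset h.ge).ge,
    fun h => congrArg card (biUnion_incidenceFinset_subset.antisymm h)⟩

theorem card_mul_le_card_edgeFinset (hs : G.IsIndepSet s) {k : ℕ}
    (hk : ∀ v ∈ s, k ≤ G.degree v) : #s * k ≤ #G.edgeFinset :=
  (card_nsmul_le_sum s _ _ hk).trans (sum_degree_le_card_edgeFinset hs)

end IndepSet

theorem card_edgeFinset_le_card_compl_mul_maxDegree {V : Type*} [Fintype V] [DecidableEq V]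
    {G : SimpleGraph V} [DecidableRel G.Adj] {s : Finset V} (hs : G.IsIndepSet s) :
    #G.edgeFinset ≤ #sᶜ * G.maxDegree := by
  have hle : ∑ v ∈ sᶜ, G.degree v ≤ #sᶜ * G.maxDegree :=
    sum_le_card_nsmul _ _ _ fun v _ => G.degree_le_maxDegree v
  have hsum := sum_add_sum_compl s fun v => G.degree v
  have htwo := G.sum_degrees_eq_twice_card_edges
  have hdeg := sum_degree_le_card_edgeFinset hs
  omega

section Regular

variable {V : Type*} [Fintype V] {G : SimpleGraph V} [DecidableRel G.Adj] {r : ℕ}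

theorem card_mul_eq_two_mul_card_edgeFinset (hreg : G.IsRegularOfDegree r) :
    Fintype.card V * r = 2 * #G.edgeFinset := by
  simp only [← G.sum_degrees_eq_twice_card_edges, hreg.degree_eq, sum_const, card_univ,
    smul_eq_mul]

theorem card_edgeFinset_eq_mul_and_eq_sub_mul_iff (hreg : G.IsRegularOfDegree r) (hr : 0 < r)
    {b : ℝ} : (#G.edgeFinset : ℝ) = b * r ∧ (#G.edgeFinset : ℝ) = (Fintype.card V - b) * r ↔
      2 * b = Fintype.card V := by
  have hr₀ : (r : ℝ) ≠ 0 := mod_cast hr.ne'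
  have hE : (Fintype.card V : ℝ) * r = 2 * #G.edgeFinset :=
    mod_cast card_mul_eq_two_mul_card_edgeFinset hreg
  constructor
  · rintro ⟨hb, -⟩
    exact mul_right_cancel₀ hr₀ (by linarith)
  · intro hb
    rw [← hb] at hE ⊢
    constructor <;> linarith

variable {s : Finset V}

theorem two_mul_card_le_card (hreg : G.IsRegularOfDegree r) (hr : 0 < r)
    (hs : G.IsIndepSet s) : 2 * #s ≤ Fintype.card V := by
  refine Nat.le_of_mul_le_mul_right ?_ hr
  rw [card_mul_eq_two_mul_card_edgeFinset hreg, mul_assoc]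
  exact Nat.mul_le_mul_left 2 (card_mul_le_card_edgeFinset hs fun v _ => (hreg.degree_eq v).ge)

theorem two_mul_card_eq_card_iff (hreg : G.IsRegularOfDegree r) (hr : 0 < r)
    (hs : G.IsIndepSet s) : 2 * #s = Fintype.card V ↔ G.IsVertexCover s := by
  have hsum : ∑ v ∈ s, G.degree v = #s * r := by
    simp only [hreg.degree_eq, sum_const, smul_eq_mul]
  rw [← sum_degree_eq_card_edgeFinset_iff hs, hsum, ← Nat.mul_left_inj hr.ne',
    card_mul_eq_two_mul_card_edgeFinset hreg, mul_assoc, Nat.mul_right_inj two_ne_zero]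

end Regular

section IndepNum

variable {V : Type*} [Fintype V] (G : SimpleGraph V)

theorem indepNum_eq_simpleGraph_indepNum : indepNum G = G.indepNum := by
  simp only [indepNum, SimpleGraph.indepNum, SimpleGraph.isNIndepSet_iff,
    isIndepSet_iff_forall_not_adj, mem_coe, and_comm]

theorem exists_isIndepSet_card_eq_indepNum :
    ∃ s : Finset V, G.IsIndepSet s ∧ #s = indepNum G := by
  obtain ⟨s, hs⟩ := G.exists_isNIndepSet_indepNum
  exact ⟨s, hs.isIndepSet, hs.card_eq.trans (indepNum_eq_simpleGraph_indepNum G).symm⟩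

variable {G} in
theorem card_le_indepNum {s : Finset V} (hs : G.IsIndepSet s) : #s ≤ indepNum G :=
  indepNum_eq_simpleGraph_indepNum G ▸ hs.card_le_indepNum

theorem indepNum_pos [Nonempty V] : 0 < indepNum G := by
  obtain ⟨v⟩ := ‹Nonempty V›
  have hv : G.IsIndepSet ({v} : Finset V) := by simp
  exact (card_singleton v).symm.trans_le (card_le_indepNum hv)

variable [DecidableRel G.Adj]

theorem indepNum_mul_minDegree_le_card_edgeFinset :
    indepNum G * G.minDegree ≤ #G.edgeFinset := by
  obtain ⟨s, hs, hcard⟩ := exists_isIndepSet_card_eq_indepNum G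
  exact hcard ▸ card_mul_le_card_edgeFinset hs fun v _ => G.minDegree_le_degree v

theorem card_edgeFinset_le_card_sub_indepNum_mul_maxDegree :
    #G.edgeFinset ≤ (Fintype.card V - indepNum G) * G.maxDegree := by
  classical
  obtain ⟨s, hs, hcard⟩ := exists_isIndepSet_card_eq_indepNum G
  rw [← hcard, ← card_compl]
  exact card_edgeFinset_le_card_compl_mul_maxDegree hs

variable {G}

theorem nonempty_of_minDegree_pos (hδ : 0 < G.minDegree) : Nonempty V := by
  by_contra hV
  rw [not_nonempty_iff] at hV
  exact hδ.ne' G.minDegree_of_subsingleton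

theorem indepNum_lt_card (hδ : 0 < G.minDegree) : indepNum G < Fintype.card V := by
  have := nonempty_of_minDegree_pos hδ
  have hprod : 0 < (Fintype.card V - indepNum G) * G.maxDegree :=
    calc 0 < indepNum G * G.minDegree := Nat.mul_pos (indepNum_pos G) hδ
      _ ≤ #G.edgeFinset := indepNum_mul_minDegree_le_card_edgeFinset G
      _ ≤ (Fintype.card V - indepNum G) * G.maxDegree :=
        card_edgeFinset_le_card_sub_indepNum_mul_maxDegree G
  exact Nat.lt_of_sub_pos (Nat.pos_of_mul_pos_right hprod)

theorem isRegularBalancedBipartite_iff (hδ : 0 < G.minDegree) :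
    IsRegularBalancedBipartite G ↔
      G.IsRegularOfDegree G.minDegree ∧ 2 * indepNum G = Fintype.card V := by
  have := nonempty_of_minDegree_pos hδ
  obtain ⟨s, hs, hcard⟩ := exists_isIndepSet_card_eq_indepNum G
  constructor
  · rintro ⟨A, r, hA, hbip, hreg⟩
    obtain rfl : G.minDegree = r := hreg.minDegree_eq
    have hAindep : G.IsIndepSet A := (isIndepSet_and_isVertexCover_iff.2 hbip).1
    refine ⟨hreg, le_antisymm (hcard ▸ two_mul_card_le_card hreg hδ hs) ?_⟩
    exact hA ▸ Nat.mul_le_mul_left 2 (card_le_indepNum hAindep)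
  · rintro ⟨hreg, hβ⟩
    rw [← hcard] at hβ
    have hcover : G.IsVertexCover s := (two_mul_card_eq_card_iff hreg hδ hs).1 hβ
    exact ⟨s, G.minDegree, hβ, isIndepSet_and_isVertexCover_iff.1 ⟨hs, hcover⟩, hreg⟩

theorem isRegularBalancedBipartite_iff_card_edgeFinset_eq (hδ : 0 < G.minDegree) :
    IsRegularBalancedBipartite G ↔ G.IsRegularOfDegree G.minDegree ∧
      (#G.edgeFinset : ℝ) = indepNum G * G.minDegree ∧
      (#G.edgeFinset : ℝ) = (Fintype.card V - indepNum G) * G.maxDegree := by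
  have := nonempty_of_minDegree_pos hδ
  rw [isRegularBalancedBipartite_iff hδ]
  refine and_congr_right fun hreg => ?_
  rw [hreg.maxDegree_eq, card_edgeFinset_eq_mul_and_eq_sub_mul_iff hreg hδ]
  norm_cast

end IndepNum

/-- For a graph `G` with `n` vertices, `e` edges, minimum degree `δ ≥ 1`, maximum degree `Δ`,
and independence number `β`:
`F(G) ≥ (n − β)δ³ + (δ/β)(2β(βδ² + e²/(n − β)) − e² − 2β(n − β)Δ²)`, with equality iff
`G` is a regular balanced bipartite graph. -/
theorem stmt3 {V : Type*} [Fintype V] [DecidableEq V] (G : SimpleGraph V) [DecidableRel G.Adj]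
    (hδ : 1 ≤ G.minDegree) :
    forgottenIndex G ≥ ((Fintype.card V : ℝ) - indepNum G) * (G.minDegree : ℝ) ^ 3
        + ((G.minDegree : ℝ) / indepNum G) *
          (2 * (indepNum G : ℝ) * ((indepNum G : ℝ) * (G.minDegree : ℝ) ^ 2
              + (G.edgeFinset.card : ℝ) ^ 2 / ((Fintype.card V : ℝ) - indepNum G))
            - (G.edgeFinset.card : ℝ) ^ 2
            - 2 * (indepNum G : ℝ) * ((Fintype.card V : ℝ) - indepNum G)
              * (G.maxDegree : ℝ) ^ 2) ∧
    (forgottenIndex G = ((Fintype.card V : ℝ) - indepNum G) * (G.minDegree : ℝ) ^ 3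
        + ((G.minDegree : ℝ) / indepNum G) *
          (2 * (indepNum G : ℝ) * ((indepNum G : ℝ) * (G.minDegree : ℝ) ^ 2
              + (G.edgeFinset.card : ℝ) ^ 2 / ((Fintype.card V : ℝ) - indepNum G))
            - (G.edgeFinset.card : ℝ) ^ 2
            - 2 * (indepNum G : ℝ) * ((Fintype.card V : ℝ) - indepNum G)
              * (G.maxDegree : ℝ) ^ 2)
      ↔ IsRegularBalancedBipartite G) := by
  have := nonempty_of_minDegree_pos hδ
  have hδ₀ : (0 : ℝ) < G.minDegree := mod_cast hδ
  have hβ₀ : (0 : ℝ) < indepNum G := mod_cast indepNum_pos G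
  have hβn : (indepNum G : ℝ) < Fintype.card V := mod_cast indepNum_lt_card hδ
  have hlow : (indepNum G : ℝ) * G.minDegree ≤ #G.edgeFinset :=
    mod_cast indepNum_mul_minDegree_le_card_edgeFinset G
  have hupp : (#G.edgeFinset : ℝ) ≤ (Fintype.card V - indepNum G) * G.maxDegree := by
    rw [← Nat.cast_sub (indepNum_lt_card hδ).le]
    exact_mod_cast card_edgeFinset_le_card_sub_indepNum_mul_maxDegree G
  have hbound := forgottenLowerBound_le hβ₀ hβn hδ₀.le hlow hupp
  have hF : _ ≤ forgottenIndex G := card_mul_minDegree_pow_le_sum_degree_pow G 3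
  refine ⟨hbound.trans hF, ?_⟩
  calc forgottenIndex G = forgottenLowerBound _ _ _ _ _
      ↔ forgottenIndex G = Fintype.card V * (G.minDegree : ℝ) ^ 3 ∧
          forgottenLowerBound _ _ _ _ _ = Fintype.card V * (G.minDegree : ℝ) ^ 3 :=
        ⟨fun h => ⟨hF.antisymm' (h.trans_le hbound), hbound.antisymm (h ▸ hF)⟩,
          fun ⟨h₁, h₂⟩ => h₁.trans h₂.symm⟩
    _ ↔ IsRegularBalancedBipartite G := by
        rw [isRegularBalancedBipartite_iff_card_edgeFinset_eq hδ, forgottenIndex,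
          sum_degree_pow_eq_card_mul_minDegree_pow_iff G three_ne_zero,
          forgottenLowerBound_eq_iff hβ₀ hβn hδ₀ hlow hupp]
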